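/- arXiv:2510.01147 — 5 statements merged into one kernel-verified Lean document; each statement's English description precedes it below -/
import Mathlib

section
/- Let 0 < α < β, C_h > 0, M > 0, and 0 < a₁ ≤ a₂, and set α_e := a₁²(β−α)/(a₂·C_h·M). Let E₀ ≥ 0 and V₀ ≥ 0 satisfy a₁·E₀ ≤ V₀ ≤ a₂·E₀, and let h : [0,∞) → ℝ be differentiable with h′(t) ≥ −α·h(t) − C_h·M·E₀·e^{−βt} for all t ≥ 0 and h(0) ≥ V₀/α_e. Then h(t) ≥ 0 for all t ≥ 0. -/
/-!
With the integrating factor `e^{αt}` and `K = C_h M E₀`, the function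
`g t = e^{αt} h t - K/(β-α) · e^{-(β-α)t}` has derivative
`e^{αt} (h' t + α h t + K e^{-βt}) ≥ 0`, so it is monotone on `[0,∞)`.
Since `V₀ ≥ a₁ E₀` and `a₂ ≥ a₁`, the initial condition gives `h 0 ≥ K/(β-α)`, i.e. `g 0 ≥ 0`.
Hence `e^{αt} h t ≥ K/(β-α) · e^{-(β-α)t} ≥ 0`.
-/

/-- Theorem 3, Safety Assessment: with
`α_e = a₁²(β-α)/(a₂ C_h M)`, initial condition `h 0 ≥ V₀/α_e`
(membership in the recurrent set `S_V`), and barrier inequality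
`h' ≥ -α h - C_h M E₀ e^{-βt}`, the barrier value stays nonnegative. -/
theorem safety_assessment
    (α β Ch M a₁ a₂ : ℝ) (hα : 0 < α) (hαβ : α < β)
    (hCh : 0 < Ch) (hM : 0 < M) (ha₁ : 0 < a₁) (ha₁₂ : a₁ ≤ a₂)
    (E₀ V₀ : ℝ) (hE : 0 ≤ E₀) (hV₀ : 0 ≤ V₀)
    (hsand : a₁ * E₀ ≤ V₀ ∧ V₀ ≤ a₂ * E₀)
    (h h' : ℝ → ℝ)
    (hderiv : ∀ t ∈ Set.Ici (0:ℝ), HasDerivWithinAt h (h' t) (Set.Ici 0) t)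
    (hineq : ∀ t ∈ Set.Ici (0:ℝ),
      h' t ≥ -α * h t - Ch * M * E₀ * Real.exp (-β * t))
    (hinit : h 0 ≥ V₀ / (a₁ ^ 2 * (β - α) / (a₂ * Ch * M))) :
    ∀ t ∈ Set.Ici (0:ℝ), h t ≥ 0 := by
  have hd : 0 < β - α := sub_pos.mpr hαβ
  have ha₂ : 0 < a₂ := ha₁.trans_le ha₁₂
  have h0 : Ch * M * E₀ / (β - α) ≤ h 0 := by
    refine le_trans ?_ hinit
    rw [div_div_eq_mul_div, div_le_div_iff₀ hd (by positivity)]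
    have key : a₁ ^ 2 * E₀ ≤ V₀ * a₂ := by
      calc a₁ ^ 2 * E₀ = a₁ * E₀ * a₁ := by ring
        _ ≤ V₀ * a₂ := mul_le_mul hsand.1 ha₁₂ ha₁.le hV₀
    calc Ch * M * E₀ * (a₁ ^ 2 * (β - α)) = a₁ ^ 2 * E₀ * (Ch * M * (β - α)) := by ring
      _ ≤ V₀ * a₂ * (Ch * M * (β - α)) := by gcongr
      _ = V₀ * (a₂ * Ch * M) * (β - α) := by ring
  have hexp (c t : ℝ) : HasDerivAt (fun s => Real.exp (c * s)) (Real.exp (c * t) * c) t := by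
    simpa using ((hasDerivAt_id t).const_mul c).exp
  have hg : ∀ t ∈ Set.Ici (0:ℝ), HasDerivWithinAt
      (fun s => Real.exp (α * s) * h s
        - Ch * M * E₀ / (β - α) * Real.exp (-(β - α) * s))
      (Real.exp (α * t) * (h' t + α * h t + Ch * M * E₀ * Real.exp (-β * t)))
      (Set.Ici 0) t := by
    intro t ht
    refine (((hexp α t).hasDerivWithinAt.mul (hderiv t ht)).sub
      ((hexp (-(β - α)) t).hasDerivWithinAt.const_mul _)).congr_deriv ?_
    have hsplit : Real.exp (-(β - α) * t) = Real.exp (α * t) * Real.exp (-β * t) := by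
      rw [← Real.exp_add]
      ring_nf
    rw [hsplit]
    field_simp
    ring
  have hmono := monotoneOn_of_hasDerivWithinAt_nonneg (convex_Ici (0:ℝ))
    (fun t ht => (hg t ht).continuousWithinAt)
    (fun t ht => (hg t (interior_subset ht)).mono interior_subset)
    (fun t ht => mul_nonneg (Real.exp_pos _).le
      (by linarith [hineq t (interior_subset ht)]))
  intro t ht
  have hle := hmono Set.self_mem_Ici ht ht
  simp only [mul_zero, Real.exp_zero, one_mul, mul_one] at hle
  have hnn : 0 ≤ Ch * M * E₀ / (β - α) * Real.exp (-(β - α) * t) := by positivity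
  exact nonneg_of_mul_nonneg_right (by linarith) (Real.exp_pos (α * t))
end

section
/- Let 0 < α < β, C_h > 0, M > 0, and 0 < a₁ ≤ a₂, and set α_e := a₁²(β−α)/(a₂·C_h·M). Let E₀ ≥ 0 and V₀ ≥ 0 satisfy a₁·E₀ ≤ V₀ ≤ a₂·E₀, and let h : [0,∞) → ℝ be differentiable with h′(t) ≥ −α·h(t) − C_h·M·E₀·e^{−βt} for all t ≥ 0 and h(0) ≥ V₀/α_e. Then for all t ≥ 0, h(t) ≥ e^{−αt}·V₀·(C_h·M/(a₁(β−α)))·(a₂/a₁ − 1). -/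
/-!
With `K = Ch * M * E₀`, the differential inequality says exactly that
`g t = e^{αt} h t - K/(β-α) e^{-(β-α)t}` has nonnegative derivative on `[0, ∞)`.
Hence `g 0 ≤ g t`, which gives `h 0 - K/(β-α) ≤ e^{αt} h t` after dropping the positive
exponential. The initial condition bounds `h 0` below, and `a₁ E₀ ≤ V₀` bounds `K` above by
`Ch * M * V₀ / a₁`; the difference of these two bounds is the claimed constant.
-/

/-- Comparison lemma (Grönwall with an exponentially decaying forcing term), obtained from the
integrating factor `e^{αt}`. -/
lemma sub_le_exp_mul_of_deriv_ge {α β K : ℝ} (hαβ : α < β) (hK : 0 ≤ K) {h h' : ℝ → ℝ}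
    (hderiv : ∀ t ∈ Set.Ici (0:ℝ), HasDerivWithinAt h (h' t) (Set.Ici 0) t)
    (hineq : ∀ t ∈ Set.Ici (0:ℝ), h' t ≥ -α * h t - K * Real.exp (-β * t))
    {t : ℝ} (ht : 0 ≤ t) :
    h 0 - K / (β - α) ≤ Real.exp (α * t) * h t := by
  have hd : 0 < β - α := sub_pos.2 hαβ
  have hg : ∀ s ∈ Set.Ici (0:ℝ), HasDerivWithinAt
      (fun s => Real.exp (α * s) * h s - K / (β - α) * Real.exp (-(β - α) * s))
      (Real.exp (α * s) * (h' s + α * h s) + K * Real.exp (-(β - α) * s)) (Set.Ici 0) s := by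
    intro s hs
    have e1 := ((hasDerivAt_id s).const_mul α).exp.hasDerivWithinAt (s := Set.Ici 0)
    have e2 := ((hasDerivAt_id s).const_mul (-(β - α))).exp.hasDerivWithinAt (s := Set.Ici 0)
    refine ((e1.mul (hderiv s hs)).sub (e2.const_mul (K / (β - α)))).congr_deriv ?_
    simp only [id]
    field_simp
    ring
  have hmono := monotoneOn_of_hasDerivWithinAt_nonneg (convex_Ici (0:ℝ))
    (fun s hs => (hg s hs).continuousWithinAt)
    (fun s hs => (hg s (interior_subset hs)).mono interior_subset)
    (fun s hs => by
      have h1 := hineq s (interior_subset hs)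
      have h2 : Real.exp (-(β - α) * s) = Real.exp (α * s) * Real.exp (-β * s) := by
        rw [← Real.exp_add]; ring_nf
      have h3 : 0 ≤ Real.exp (α * s) * (h' s + α * h s + K * Real.exp (-β * s)) :=
        mul_nonneg (Real.exp_pos _).le (by linarith)
      rw [h2]; linarith)
  have h0t := hmono Set.self_mem_Ici ht ht
  simp only [mul_zero, Real.exp_zero, one_mul, mul_one] at h0t
  have : 0 ≤ K / (β - α) * Real.exp (-(β - α) * t) := by positivity
  linarith

/-- quantitative lower bound in the proof of Theorem 3:
`h t ≥ e^{-αt} V₀ (C_h M/(a₁(β-α))) (a₂/a₁ - 1)`. -/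
theorem safety_assessment_quantitative
    (α β Ch M a₁ a₂ : ℝ) (hα : 0 < α) (hαβ : α < β)
    (hCh : 0 < Ch) (hM : 0 < M) (ha₁ : 0 < a₁) (ha₁₂ : a₁ ≤ a₂)
    (E₀ V₀ : ℝ) (hE : 0 ≤ E₀) (hV₀ : 0 ≤ V₀)
    (hsand : a₁ * E₀ ≤ V₀ ∧ V₀ ≤ a₂ * E₀)
    (h h' : ℝ → ℝ)
    (hderiv : ∀ t ∈ Set.Ici (0:ℝ), HasDerivWithinAt h (h' t) (Set.Ici 0) t)
    (hineq : ∀ t ∈ Set.Ici (0:ℝ),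
      h' t ≥ -α * h t - Ch * M * E₀ * Real.exp (-β * t))
    (hinit : h 0 ≥ V₀ / (a₁ ^ 2 * (β - α) / (a₂ * Ch * M))) :
    ∀ t ∈ Set.Ici (0:ℝ),
      h t ≥ Real.exp (-α * t) * V₀ * (Ch * M / (a₁ * (β - α))) * (a₂ / a₁ - 1) := by
  intro t ht
  have hd : 0 < β - α := sub_pos.2 hαβ
  have hcmp := sub_le_exp_mul_of_deriv_ge hαβ (by positivity : 0 ≤ Ch * M * E₀) hderiv hineq ht
  have hK : Ch * M * E₀ / (β - α) ≤ Ch * M * (V₀ / a₁) / (β - α) := by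
    have : E₀ ≤ V₀ / a₁ := by rw [le_div_iff₀ ha₁]; linarith [hsand.1]
    gcongr
  have hconst : V₀ / (a₁ ^ 2 * (β - α) / (a₂ * Ch * M)) - Ch * M * (V₀ / a₁) / (β - α)
      = V₀ * (Ch * M / (a₁ * (β - α))) * (a₂ / a₁ - 1) := by
    have ha₂ : 0 < a₂ := ha₁.trans_le ha₁₂
    field_simp
  have hbound : V₀ * (Ch * M / (a₁ * (β - α))) * (a₂ / a₁ - 1) ≤ Real.exp (α * t) * h t := by
    linarith
  calc Real.exp (-α * t) * V₀ * (Ch * M / (a₁ * (β - α))) * (a₂ / a₁ - 1)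
      = Real.exp (-α * t) * (V₀ * (Ch * M / (a₁ * (β - α))) * (a₂ / a₁ - 1)) := by ring
    _ ≤ Real.exp (-α * t) * (Real.exp (α * t) * h t) := by gcongr
    _ = h t := by rw [← mul_assoc, ← Real.exp_add]; simp
end

section
/- Let 0 < α < β, let c > 0 and K ≥ 0, and let V : [0,∞) → ℝ be continuously differentiable with 0 ≤ V(s) ≤ K·e^{−βs}·V(0) for all s ≥ 0 and c·K/(β−α) ≤ 1. Then for all t ≥ 0, V(0) − e^{αt}·V(t) − c·∫₀ᵗ e^{αs}·V(s) ds ≥ e^{−(β−α)t}·(V(0) − e^{βt}·V(t)). -/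
/-!
The `V t` terms on the two sides agree, since `e^{-(β-α)t} e^{βt} = e^{αt}`. The claim therefore
reduces to `c ∫₀ᵗ e^{αs} V s ds ≤ V 0 (1 - e^{-(β-α)t})`. The envelope bounds the integrand by
`K V 0 e^{-(β-α)s}`, whose integral is `K V 0 (1 - e^{-(β-α)t}) / (β-α)`, and `cK/(β-α) ≤ 1`
absorbs the constant because `V 0 ≥ 0`.
-/

/-- central integral estimate in the proof of Theorem 2:
under the exponential envelope `0 ≤ V s ≤ K e^{-βs} V 0` and `cK/(β-α) ≤ 1`,
`V 0 - e^{αt} V t - c ∫₀ᵗ e^{αs} V s ds ≥ e^{-(β-α)t}(V 0 - e^{βt} V t)`. -/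
theorem integral_estimate_RCBF
    (α β c K : ℝ) (hα : 0 < α) (hαβ : α < β) (hc : 0 < c) (hK : 0 ≤ K)
    (V : ℝ → ℝ) (hV : ContDiffOn ℝ 1 V (Set.Ici 0))
    (henv : ∀ s ∈ Set.Ici (0:ℝ), 0 ≤ V s ∧ V s ≤ K * Real.exp (-β * s) * V 0)
    (hcK : c * K / (β - α) ≤ 1) :
    ∀ t ∈ Set.Ici (0:ℝ),
      V 0 - Real.exp (α * t) * V t - c * ∫ s in (0:ℝ)..t, Real.exp (α * s) * V s
        ≥ Real.exp (-(β - α) * t) * (V 0 - Real.exp (β * t) * V t) := by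
  intro t ht
  have ht0 : (0:ℝ) ≤ t := ht
  have hγ : 0 < β - α := sub_pos.mpr hαβ
  have hV0 : 0 ≤ V 0 := (henv 0 Set.self_mem_Ici).1
  have hcont : ContinuousOn (fun s => Real.exp (α * s) * V s) (Set.uIcc 0 t) := by
    rw [Set.uIcc_of_le ht0]
    exact (by fun_prop : Continuous fun s : ℝ => Real.exp (α * s)).continuousOn.mul
      (hV.continuousOn.mono Set.Icc_subset_Ici_self)
  have hint : ∫ s in (0:ℝ)..t, K * V 0 * Real.exp (-(β - α) * s)
      = K * V 0 * ((1 - Real.exp (-(β - α) * t)) / (β - α)) := by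
    rw [intervalIntegral.integral_const_mul,
      intervalIntegral.integral_comp_mul_left Real.exp (neg_ne_zero.mpr hγ.ne'), integral_exp,
      mul_zero, Real.exp_zero, smul_eq_mul, inv_neg]
    field_simp
    ring
  have hle : ∫ s in (0:ℝ)..t, Real.exp (α * s) * V s
      ≤ K * V 0 * ((1 - Real.exp (-(β - α) * t)) / (β - α)) := by
    rw [← hint]
    refine intervalIntegral.integral_mono_on ht0 hcont.intervalIntegrable
      (Continuous.intervalIntegrable (by fun_prop) _ _) fun s hs => ?_
    calc Real.exp (α * s) * V s
        ≤ Real.exp (α * s) * (K * Real.exp (-β * s) * V 0) := by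
          gcongr
          exact (henv s hs.1).2
      _ = K * V 0 * Real.exp (-(β - α) * s) := by
          rw [show -(β - α) * s = α * s + -β * s by ring, Real.exp_add]
          ring
  have hexp : Real.exp (-(β - α) * t) ≤ 1 :=
    Real.exp_le_one_iff.mpr (by nlinarith)
  have hcint : c * ∫ s in (0:ℝ)..t, Real.exp (α * s) * V s
      ≤ V 0 * (1 - Real.exp (-(β - α) * t)) := by
    calc c * ∫ s in (0:ℝ)..t, Real.exp (α * s) * V s
        ≤ c * (K * V 0 * ((1 - Real.exp (-(β - α) * t)) / (β - α))) := by gcongr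
      _ = c * K / (β - α) * (V 0 * (1 - Real.exp (-(β - α) * t))) := by ring
      _ ≤ V 0 * (1 - Real.exp (-(β - α) * t)) :=
          mul_le_of_le_one_left (mul_nonneg hV0 (sub_nonneg.mpr hexp)) hcK
  have hprod : Real.exp (-(β - α) * t) * Real.exp (β * t) = Real.exp (α * t) := by
    rw [← Real.exp_add]
    ring_nf
  rw [mul_sub, ← mul_assoc, hprod]
  linarith
end

section
/- Let E be a real normed vector space, let 0 < α < β, C_h > 0, M > 0, and 0 < a₁ ≤ a₂, and set α_e := a₁²(β−α)/(a₂·C_h·M). Let ε : [0,∞) → [0,∞) and let V, h : [0,∞) → ℝ be continuously differentiable with: (i) a₁·ε(t) ≤ V(t) ≤ a₂·ε(t) for all t ≥ 0; (ii) ε(t) ≤ M·e^{−βt}·ε(0) for all t ≥ 0; and (iii) h′(t) ≥ −α·h(t) − C_h·ε(t) for all t ≥ 0. Define h_V := −V + α_e·h. Then for all t ≥ 0, e^{αt}·h_V(t) − h_V(0) ≥ e^{−(β−α)t}·(V(0) − e^{βt}·V(t)). -/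
/-!
The terms `e^{αt} V t` cancel, so the claim is
`0 ≤ V 0 (1 - e^{-(β-α)t}) + α_e (e^{αt} h t - h 0)`.
By the differential inequality for `h` and the decay of `ε`,
`(e^{αs} h s)' ≥ -C_h e^{αs} ε s ≥ -C_h M ε 0 e^{-(β-α)s}`, so
`e^{αs} h s - K e^{-(β-α)s}` with `K = C_h M ε 0 / (β-α)` is nondecreasing. Hence
`e^{αt} h t - h 0 ≥ -K (1 - e^{-(β-α)t})`, and `α_e K = (a₁²/a₂) ε 0 ≤ a₁ ε 0 ≤ V 0`.
-/

/-- key pointwise estimate of Theorem 2, Recurrent CBF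
Construction: with `α_e = a₁²(β-α)/(a₂ C_h M)` and `h_V = -V + α_e h`,
`e^{αt} h_V(t) - h_V(0) ≥ e^{-(β-α)t}(V 0 - e^{βt} V t)`. -/
theorem RCBF_pointwise_estimate
    {E : Type*} [NormedAddCommGroup E] [NormedSpace ℝ E]
    (α β Ch M a₁ a₂ : ℝ) (hα : 0 < α) (hαβ : α < β)
    (hCh : 0 < Ch) (hM : 0 < M) (ha₁ : 0 < a₁) (ha₁₂ : a₁ ≤ a₂)
    (ε : ℝ → ℝ) (hε : ∀ t, 0 ≤ t → 0 ≤ ε t)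
    (V h V' h' : ℝ → ℝ)
    (hVderiv : ∀ t ∈ Set.Ici (0:ℝ), HasDerivWithinAt V (V' t) (Set.Ici 0) t)
    (hVcont : ContinuousOn V' (Set.Ici 0))
    (hhderiv : ∀ t ∈ Set.Ici (0:ℝ), HasDerivWithinAt h (h' t) (Set.Ici 0) t)
    (hhcont : ContinuousOn h' (Set.Ici 0))
    (hsand : ∀ t, 0 ≤ t → a₁ * ε t ≤ V t ∧ V t ≤ a₂ * ε t)
    (hdecay : ∀ t, 0 ≤ t → ε t ≤ M * Real.exp (-β * t) * ε 0)
    (hineq : ∀ t ∈ Set.Ici (0:ℝ), h' t ≥ -α * h t - Ch * ε t) :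
    ∀ t ∈ Set.Ici (0:ℝ),
      Real.exp (α * t) * (-V t + (a₁ ^ 2 * (β - α) / (a₂ * Ch * M)) * h t) -
          (-V 0 + (a₁ ^ 2 * (β - α) / (a₂ * Ch * M)) * h 0)
        ≥ Real.exp (-(β - α) * t) * (V 0 - Real.exp (β * t) * V t) := by
  intro t ht
  have ht0 : (0:ℝ) ≤ t := ht
  have hγ : 0 < β - α := sub_pos.2 hαβ
  have ha₂ : 0 < a₂ := lt_of_lt_of_le ha₁ ha₁₂
  have hε0 := hε 0 le_rfl
  set K : ℝ := Ch * M * ε 0 / (β - α) with hK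
  set c : ℝ := a₁ ^ 2 * (β - α) / (a₂ * Ch * M) with hc
  have hc0 : 0 ≤ c := by positivity
  have hKγ : K * (β - α) = Ch * M * ε 0 := by rw [hK]; field_simp
  have hcK : c * K ≤ V 0 := by
    have h1 : c * K = a₁ * ε 0 * (a₁ / a₂) := by rw [hc, hK]; field_simp
    have h2 : a₁ / a₂ ≤ 1 := (div_le_one ha₂).2 ha₁₂
    rw [h1]
    exact (mul_le_of_le_one_right (by positivity) h2).trans (hsand 0 le_rfl).1
  have hder : ∀ s ∈ Set.Ici (0:ℝ), HasDerivWithinAt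
      (fun s => Real.exp (α * s) * h s - K * Real.exp (-(β - α) * s))
      (Real.exp (α * s) * (α * 1) * h s + Real.exp (α * s) * h' s
        - K * (Real.exp (-(β - α) * s) * (-(β - α) * 1))) (Set.Ici 0) s := by
    intro s hs
    exact ((((hasDerivAt_id' s).const_mul α).exp.hasDerivWithinAt).mul (hhderiv s hs)).sub
      (((((hasDerivAt_id' s).const_mul (-(β - α))).exp).const_mul K).hasDerivWithinAt)
  have hmono : MonotoneOn
      (fun s => Real.exp (α * s) * h s - K * Real.exp (-(β - α) * s)) (Set.Ici 0) := by
    refine monotoneOn_of_hasDerivWithinAt_nonneg (convex_Ici 0)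
      (fun s hs => (hder s hs).continuousWithinAt)
      (fun s hs => (hder s (interior_subset hs)).mono interior_subset) ?_
    intro s hs
    have hs0 := interior_subset hs
    have h1 := mul_le_mul_of_nonneg_left (hineq s hs0) (Real.exp_pos (α * s)).le
    have h2 := mul_le_mul_of_nonneg_left (hdecay s hs0)
      (mul_nonneg hCh.le (Real.exp_pos (α * s)).le)
    have h3 : Real.exp (-(β - α) * s) = Real.exp (α * s) * Real.exp (-β * s) := by
      rw [← Real.exp_add]; ring_nf
    have h4 : K * (Real.exp (-(β - α) * s) * (-(β - α) * 1))
        = -(Ch * Real.exp (α * s) * (M * Real.exp (-β * s) * ε 0)) := by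
      rw [h3]
      linear_combination -(Real.exp (α * s) * Real.exp (-β * s)) * hKγ
    rw [h4]
    linarith
  have hm := hmono Set.self_mem_Ici ht ht0
  simp only [mul_zero, Real.exp_zero, one_mul, mul_one] at hm
  have hE : Real.exp (-(β - α) * t) ≤ 1 := Real.exp_le_one_iff.2 (by nlinarith)
  have hEE : Real.exp (-(β - α) * t) * Real.exp (β * t) = Real.exp (α * t) := by
    rw [← Real.exp_add]; ring_nf
  have h5 := mul_le_mul_of_nonneg_left hm hc0
  have h6 := mul_le_mul_of_nonneg_right hcK (sub_nonneg.2 hE)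
  rw [mul_sub, ← mul_assoc (Real.exp (-(β - α) * t)), hEE]
  linarith
end

section
/- Let E be a real normed vector space, let τ > 0, 0 < α < β, C_h > 0, M > 0, and 0 < a₁ ≤ a₂, and set α_e := a₁²(β−α)/(a₂·C_h·M). Let ε : [0,∞) → [0,∞) and let V, h : [0,∞) → ℝ be continuously differentiable with: (i) a₁·ε(t) ≤ V(t) ≤ a₂·ε(t) for all t ≥ 0; (ii) ε(t) ≤ M·e^{−βt}·ε(0) for all t ≥ 0; (iii) h′(t) ≥ −α·h(t) − C_h·ε(t) for all t ≥ 0; and (iv) there exists t* ∈ (0, τ] with e^{β t*}·V(t*) ≤ V(0). Define h_V := −V + α_e·h. Then there exists t ∈ (0, τ] such that e^{αt}·h_V(t) ≥ h_V(0). -/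
/-!
The witness is the recurrence time `t*` of `V` itself. Multiplying the barrier inequality by the
integrating factor `e^{αt}` and inserting the decay of `ε` gives
`(e^{αt} h)' ≥ -C_h M ε(0) e^{-(β-α)t}`, so integration bounds the loss of `e^{αt} h` on `[0,t]` by
`C_h M ε(0) (1 - q) / (β - α)` with `q = e^{-(β-α)t}` (`exp_mul_barrier_lower_bound`). The gain
`α_e = a₁²(β-α)/(a₂ C_h M)` turns this loss into `(a₁²/a₂) ε(0) (1 - q) ≤ V(0) (1 - q)`, while
recurrence gives `e^{αt*} V(t*) ≤ q V(0)`; together they cost at most `V(0)`.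
-/

/-- Integrated form of the barrier inequality: the function
`e^{αt} h(t) - C_h M ε(0) / (β - α) * e^{-(β-α)t}` is nondecreasing, hence at least its value at
`0`. -/
theorem exp_mul_barrier_lower_bound
    {α β Ch M : ℝ} (hαβ : α < β) (hCh : 0 < Ch)
    {ε h h' : ℝ → ℝ}
    (hhderiv : ∀ t ∈ Set.Ici (0:ℝ), HasDerivWithinAt h (h' t) (Set.Ici 0) t)
    (hdecay : ∀ t, 0 ≤ t → ε t ≤ M * Real.exp (-β * t) * ε 0)
    (hineq : ∀ t ∈ Set.Ici (0:ℝ), h' t ≥ -α * h t - Ch * ε t)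
    {t : ℝ} (ht : 0 ≤ t) :
    h 0 - Ch * M * ε 0 / (β - α) * (1 - Real.exp (-(β - α) * t)) ≤ Real.exp (α * t) * h t := by
  have hd : 0 < β - α := sub_pos.2 hαβ
  have hder : ∀ s ∈ Set.Ici (0:ℝ), HasDerivWithinAt
      (fun s => Real.exp (α * s) * h s - Ch * M * ε 0 / (β - α) * Real.exp (-(β - α) * s))
      (Real.exp (α * s) * (h' s + α * h s) + Ch * M * ε 0 * Real.exp (-(β - α) * s))
      (Set.Ici 0) s := by
    intro s hs
    have hexp : ∀ c : ℝ, HasDerivWithinAt (fun s => Real.exp (c * s)) (Real.exp (c * s) * c)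
        (Set.Ici 0) s := fun c => by
      simpa using (((hasDerivAt_id s).const_mul c).exp).hasDerivWithinAt
    refine (((hexp α).mul (hhderiv s hs)).sub
      ((hexp (-(β - α))).const_mul (Ch * M * ε 0 / (β - α)))).congr_deriv ?_
    field_simp
    ring
  have hmono := monotoneOn_of_hasDerivWithinAt_nonneg (convex_Ici (0:ℝ))
    (fun s hs => (hder s hs).continuousWithinAt)
    (fun s hs => (hder s (interior_subset hs)).mono interior_subset) (by
      intro s hs
      have hs0 : (0:ℝ) ≤ s := interior_subset hs
      have hsplit : Real.exp (-(β - α) * s) = Real.exp (α * s) * Real.exp (-β * s) := by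
        rw [← Real.exp_add]; ring_nf
      have h1 := mul_le_mul_of_nonneg_left (hdecay s hs0) hCh.le
      have h2 : 0 ≤ h' s + α * h s + Ch * (M * Real.exp (-β * s) * ε 0) := by
        linarith [hineq s hs0]
      rw [hsplit]
      linarith [mul_nonneg (Real.exp_pos (α * s)).le h2])
  have := hmono (Set.mem_Ici.2 le_rfl) (Set.mem_Ici.2 ht) ht
  simp only [mul_zero, Real.exp_zero, one_mul, mul_one] at this
  linarith

/-- Theorem 2, Recurrent CBF Construction, along a trajectory:
if in addition the RTF satisfies the recurrence condition at time `0`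
(there is `t* ∈ (0,τ]` with `e^{βt*} V t* ≤ V 0`), then the augmented
function `h_V = -V + α_e h` satisfies the recurrent CBF condition:
there is `t ∈ (0,τ]` with `e^{αt} h_V(t) ≥ h_V(0)`. -/
theorem RCBF_construction
    {E : Type*} [NormedAddCommGroup E] [NormedSpace ℝ E]
    (τ α β Ch M a₁ a₂ : ℝ) (hτ : 0 < τ) (hα : 0 < α) (hαβ : α < β)
    (hCh : 0 < Ch) (hM : 0 < M) (ha₁ : 0 < a₁) (ha₁₂ : a₁ ≤ a₂)
    (ε : ℝ → ℝ) (hε : ∀ t, 0 ≤ t → 0 ≤ ε t)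
    (V h V' h' : ℝ → ℝ)
    (hVderiv : ∀ t ∈ Set.Ici (0:ℝ), HasDerivWithinAt V (V' t) (Set.Ici 0) t)
    (hVcont : ContinuousOn V' (Set.Ici 0))
    (hhderiv : ∀ t ∈ Set.Ici (0:ℝ), HasDerivWithinAt h (h' t) (Set.Ici 0) t)
    (hhcont : ContinuousOn h' (Set.Ici 0))
    (hsand : ∀ t, 0 ≤ t → a₁ * ε t ≤ V t ∧ V t ≤ a₂ * ε t)
    (hdecay : ∀ t, 0 ≤ t → ε t ≤ M * Real.exp (-β * t) * ε 0)
    (hineq : ∀ t ∈ Set.Ici (0:ℝ), h' t ≥ -α * h t - Ch * ε t)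
    (hrec : ∃ tstar, 0 < tstar ∧ tstar ≤ τ ∧
      Real.exp (β * tstar) * V tstar ≤ V 0) :
    ∃ t, 0 < t ∧ t ≤ τ ∧
      Real.exp (α * t) * (-V t + (a₁ ^ 2 * (β - α) / (a₂ * Ch * M)) * h t)
        ≥ -V 0 + (a₁ ^ 2 * (β - α) / (a₂ * Ch * M)) * h 0 := by
  obtain ⟨t, ht, htτ, hVt⟩ := hrec
  refine ⟨t, ht, htτ, ?_⟩
  have ha₂ : 0 < a₂ := ha₁.trans_le ha₁₂
  have hd : 0 < β - α := sub_pos.2 hαβ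
  have hbar := exp_mul_barrier_lower_bound hαβ hCh hhderiv hdecay hineq ht.le
  set q := Real.exp (-(β - α) * t) with hq
  have hq1 : q ≤ 1 := Real.exp_le_one_iff.2 (by nlinarith)
  have hV : Real.exp (α * t) * V t ≤ q * V 0 := by
    have hsplit : Real.exp (α * t) = q * Real.exp (β * t) := by
      rw [hq, ← Real.exp_add]; ring_nf
    rw [hsplit, mul_assoc]
    exact mul_le_mul_of_nonneg_left hVt (Real.exp_pos _).le
  have hgain : a₁ ^ 2 / a₂ * ε 0 ≤ V 0 := by
    refine le_trans ?_ (hsand 0 le_rfl).1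
    refine mul_le_mul_of_nonneg_right ?_ (hε 0 le_rfl)
    rw [div_le_iff₀ ha₂]
    nlinarith
  have hαe : 0 ≤ a₁ ^ 2 * (β - α) / (a₂ * Ch * M) := by positivity
  have hcancel : a₁ ^ 2 * (β - α) / (a₂ * Ch * M) * (Ch * M * ε 0 / (β - α))
      = a₁ ^ 2 / a₂ * ε 0 := by
    field_simp
  have h1 := mul_le_mul_of_nonneg_left hbar hαe
  rw [mul_sub, ← mul_assoc, hcancel] at h1
  have h2 := mul_le_mul_of_nonneg_right hgain (sub_nonneg.2 hq1)
  linarith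
end
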